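/- For every item e ∈ E and every subrealization ψ at which the greedy policy σ selects e (i.e., ψ ∈ σ_{-1}[e]), the expected marginal utility of e conditioned on e being selected by both σ and π* and on σ visiting ψ equals its unconditional expectation: E[F_ψ(e) | e ∈ S(σ) ∩ S(π*) and ψ ⊂ Ψ(σ)] = E[F_ψ(e)]. -/

import Mathlib

/-!
Common framework for the Stochastic Submodular Cover problem
(Hellerstein–Kletenik–Parthasarathy, "A Tight Bound for Stochastic Submodular Cover").
-/

namespace SSC

open Finset
open scoped Classical

noncomputable section

variable {E O : Type*}

/-- A subrealization assigns to each item either a state or `none` (unassigned).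
A realization corresponds to the case where every item is assigned. -/
abbrev Sub (E O : Type*) := E → Option O

/-- `subext ψ ψ'` means `ψ ⊆ ψ'` as partial assignments of states to items. -/
def subext (ψ ψ' : Sub E O) : Prop := ∀ e o, ψ e = some o → ψ' e = some o

/-- `ssubext ψ ψ'` means `ψ ⊂ ψ'` (strict extension). -/
def ssubext (ψ ψ' : Sub E O) : Prop := subext ψ ψ' ∧ ψ ≠ ψ'

/-- Extend a subrealization `ψ` by assigning state `o` to item `e`. -/
def updateSub [DecidableEq E] (ψ : Sub E O) (e : E) (o : O) : Sub E O :=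
  fun e' => if e' = e then some o else ψ e'

/-- View a (full) realization as a subrealization. -/
def toSub (φ : E → O) : Sub E O := fun e => some (φ e)

variable [Fintype E] [DecidableEq E] [Fintype O] [DecidableEq O]

/-- An instance of the Stochastic Submodular Cover problem: positive item costs `c`,
a probability mass function `p` on realizations with mutually independent item states,
and a utility function `f` on subrealizations which is zero on the empty subrealization,
nonnegative, monotone and submodular (pointwise polymatroid), and equal to the goal
value `Q > 0` on every full realization (coverability). -/
structure Problem (E O : Type*) [Fintype E] [DecidableEq E] [Fintype O] [DecidableEq O] where
  c : E → ℝ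
  c_pos : ∀ e, 0 < c e
  p : (E → O) → ℝ
  p_nonneg : ∀ φ, 0 ≤ p φ
  p_sum : ∑ φ : E → O, p φ = 1
  indep : ∀ φ : E → O, p φ = ∏ e : E, ∑ φ' : E → O, if φ' e = φ e then p φ' else 0
  f : Sub E O → ℝ
  f_nonneg : ∀ ψ, 0 ≤ f ψ
  f_empty : f (fun _ => none) = 0
  f_mono : ∀ ψ ψ' : Sub E O, subext ψ ψ' → f ψ ≤ f ψ'
  f_submod : ∀ (ψ ψ' : Sub E O) (e : E) (o : O), subext ψ ψ' → ψ' e = none →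
      f (updateSub ψ' e o) - f ψ' ≤ f (updateSub ψ e o) - f ψ
  Q : ℝ
  Q_pos : 0 < Q
  f_cover : ∀ φ : E → O, f (toSub φ) = Q

variable (M : Problem E O)

/-- Expectation of a random variable `X` with respect to the random realization `Φ`. -/
def Ex (X : (E → O) → ℝ) : ℝ := ∑ φ : E → O, M.p φ * X φ

/-- Probability of an event `A` of the random realization `Φ`. -/
def Pr (A : (E → O) → Prop) : ℝ := ∑ φ : E → O, if A φ then M.p φ else 0

/-- Conditional expectation `E[X | A]`. -/
def cEx (X : (E → O) → ℝ) (A : (E → O) → Prop) : ℝ :=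
  (∑ φ : E → O, if A φ then M.p φ * X φ else 0) / Pr M A

/-- The random marginal increase in utility `F_ψ(e)` from observing the state of `e`. -/
def Fm (ψ : Sub E O) (e : E) (φ : E → O) : ℝ := M.f (updateSub ψ e (φ e)) - M.f ψ

/-- The unit price `υ(e|ψ) = c(e) / E[F_ψ(e)]`. -/
def price (ψ : Sub E O) (e : E) : ℝ := M.c e / Ex M (Fm M ψ e)

/-- An adaptive covering policy: at every subrealization `ψ` with `f ψ < Q` it selects an
item outside `dom ψ`. -/
def IsPolicy (π : Sub E O → E) : Prop := ∀ ψ : Sub E O, M.f ψ < M.Q → ψ (π ψ) = none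

/-- The `α`-approximate adaptive greedy policy: at every `ψ` with `f ψ < Q` the unit price of
the selected item `σ ψ` is at most `α` times the minimum unit price, i.e.
`υ(σ ψ | ψ) ≤ α · υ(e | ψ)` for every `e ∉ dom ψ`, written multiplicatively so that infinite
unit prices (zero expected marginal utility) are handled correctly. -/
def IsGreedy (α : ℝ) (σ : Sub E O → E) : Prop :=
  IsPolicy M σ ∧
    ∀ ψ : Sub E O, M.f ψ < M.Q → ∀ e : E, ψ e = none →
      M.c (σ ψ) * Ex M (Fm M ψ e) ≤ α * M.c e * Ex M (Fm M ψ (σ ψ))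

/-- One step of executing policy `π` on realization `φ`. -/
def stepPol (π : Sub E O → E) (φ : E → O) (ψ : Sub E O) : Sub E O :=
  if M.f ψ < M.Q then updateSub ψ (π ψ) (φ (π ψ)) else ψ

/-- The subrealization reached after `n` steps of executing `π` on `φ`. -/
def execAux (π : Sub E O → E) (φ : E → O) : ℕ → Sub E O
  | 0 => fun _ => none
  | n + 1 => stepPol M π φ (execAux π φ n)

/-- The cover `Ψ(π)` constructed by executing `π` on realization `φ`. -/
def cover (π : Sub E O → E) (φ : E → O) : Sub E O := execAux M π φ (Fintype.card E)

/-- `ψ` is visited when executing `π` on realization `φ`. -/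
def visits (π : Sub E O → E) (φ : E → O) (ψ : Sub E O) : Prop := ∃ n, execAux M π φ n = ψ

/-- The set `S(π)` of items selected when executing `π` on `φ`. -/
def Ssel (π : Sub E O → E) (φ : E → O) : Finset E :=
  Finset.univ.filter fun e => cover M π φ e ≠ none

/-- The cost `C(π)` incurred when executing `π` on `φ`. -/
def C (π : Sub E O → E) (φ : E → O) : ℝ := ∑ e ∈ Ssel M π φ, M.c e

/-- An adaptive covering policy of minimum expected cost. -/
def IsOptimal (π : Sub E O → E) : Prop :=
  IsPolicy M π ∧ ∀ π' : Sub E O → E, IsPolicy M π' → Ex M (C M π) ≤ Ex M (C M π')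

/-- `N(π)`: the non-leaf nodes of the decision tree of `π` — subrealizations with
`f ψ < Q` that are visited with positive probability. -/
def Nnodes (π : Sub E O → E) : Finset (Sub E O) :=
  Finset.univ.filter fun ψ => M.f ψ < M.Q ∧ 0 < Pr M fun φ => visits M π φ ψ

/-- The event `ψ ↝ i`, for a marker located at utility value `b = f(ρ_i)`:
`ψ` is the last subrealization visited by `σ` (on the given realization) whose
utility is at most `b`. -/
def leadsTo (σ : Sub E O → E) (b : ℝ) (ψ : Sub E O) (φ : E → O) : Prop :=
  visits M σ φ ψ ∧ M.f ψ ≤ b ∧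
    ∀ ψ' : Sub E O, visits M σ φ ψ' → M.f ψ' ≤ b → subext ψ' ψ

/-- The revenue `λ_i = υ_ψ · ε_i` collected by `σ` from the marker located at utility
value `b = f(ρ_i)` with interval length `εi`, where `ψ` is the unique subrealization
with `ψ ↝ i`. -/
def lam (σ : Sub E O → E) (b εi : ℝ) (φ : E → O) : ℝ :=
  ∑ ψ : Sub E O, if leadsTo M σ b ψ φ then price M ψ (σ ψ) * εi else 0

/-- The revenue `μ(e)` collected by the optimal policy `πs` from item `e`
(relative to the greedy policy `σ`, both executed on the same realization). -/
def mu (σ πs : Sub E O → E) (e : E) (φ : E → O) : ℝ :=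
  if e ∈ Ssel M πs φ then
    if e ∈ Ssel M σ φ then
      ∑ ψ : Sub E O,
        if visits M σ φ ψ ∧ M.f ψ < M.Q ∧ σ ψ = e then price M ψ e * Fm M ψ e φ else 0
    else M.c e
  else 0

/-- The total revenue `μ*` collected by the optimal policy. -/
def muStar (σ πs : Sub E O → E) (φ : E → O) : ℝ := ∑ e : E, mu M σ πs e φ

/-- Replay of the internal state of policy `πs` in the second stage of the hybrid policy:
starting from the empty subrealization, repeatedly query `πs`; an item whose state is
already recorded in `ψ'` is not re-selected, its recorded state being used instead. -/
def replayAux (πs : Sub E O → E) (ψ' : Sub E O) : ℕ → Sub E O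
  | 0 => fun _ => none
  | n + 1 =>
    if M.f (replayAux πs ψ' n) < M.Q then
      match ψ' (πs (replayAux πs ψ' n)) with
      | some o => updateSub (replayAux πs ψ' n) (πs (replayAux πs ψ' n)) o
      | none => replayAux πs ψ' n
    else replayAux πs ψ' n

/-- The hybrid policy `π^ψ0`: follow `σ` until `ψ0` is visited, then switch to executing
`πs` from the root of its tree, never re-selecting an item of `dom ψ0` and using the
state recorded in `ψ0` instead. -/
def hybrid (σ πs : Sub E O → E) (ψ0 : Sub E O) : Sub E O → E := fun ψ' =>
  if subext ψ0 ψ' then πs (replayAux M πs ψ' (Fintype.card E)) else σ ψ'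

/-- `δ⁺_ψ0(e)`: the marginal utility obtained by the hybrid policy `π^ψ0` when it selects
`e` during its second stage, and `0` if `e` is not selected in the second stage. -/
def deltaPlus (σ πs : Sub E O → E) (ψ0 : Sub E O) (e : E) (φ : E → O) : ℝ :=
  ∑ ψ' : Sub E O,
    if subext ψ0 ψ' ∧ visits M (hybrid M σ πs ψ0) φ ψ' ∧
        ssubext ψ' (cover M (hybrid M σ πs ψ0) φ) ∧ hybrid M σ πs ψ0 ψ' = e
    then Fm M ψ' e φ else 0

/-!
The run of a policy on `φ` reaches `e` before it has read the state of `e`, so whether `e` is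
selected does not depend on `φ e`. A node `ψ` with `f ψ < Q` that is visited on some realization is
visited on exactly the realizations extending `ψ`, and if the policy selects `e` at `ψ` then
`e ∉ dom ψ`, so this event does not depend on `φ e` either. On the other hand `F_ψ(e)` depends on
`φ e` alone, and functions of complementary sets of coordinates are independent.
-/

section Independence

variable {M : Problem E O} {s : Set E}

theorem p_piecewise_mul_p_piecewise (M : Problem E O) (s : Set E) (φ φ' : E → O) :
    M.p (s.piecewise φ φ') * M.p (s.piecewise φ' φ) = M.p φ * M.p φ' := by
  simp only [M.indep (s.piecewise _ _), M.indep φ, M.indep φ', ← Finset.prod_mul_distrib]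
  refine Finset.prod_congr rfl fun i _ => ?_
  by_cases hi : i ∈ s
  · simp only [Set.piecewise_eq_of_mem _ _ _ hi]
  · simp only [Set.piecewise_eq_of_notMem _ _ _ hi, mul_comm]

theorem Ex_mul_of_dependsOn {X Y : (E → O) → ℝ} (hX : DependsOn X s) (hY : DependsOn Y sᶜ) :
    Ex M (fun φ => X φ * Y φ) = Ex M X * Ex M Y := by
  let swap (x : (E → O) × (E → O)) : (E → O) × (E → O) :=
    (s.piecewise x.1 x.2, s.piecewise x.2 x.1)
  have swap_involutive : Function.Involutive swap := fun x => by
    ext i <;> by_cases hi : i ∈ s <;> simp [swap, hi]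
  have hX_swap (x) : X (swap x).1 = X x.1 := hX (Set.piecewise_eqOn s x.1 x.2)
  have hY_swap (x) : Y (swap x).2 = Y x.1 := hY (Set.piecewise_eqOn_compl s x.2 x.1)
  have hp_swap (x) : M.p (swap x).1 * M.p (swap x).2 = M.p x.1 * M.p x.2 :=
    p_piecewise_mul_p_piecewise M s x.1 x.2
  symm
  calc Ex M X * Ex M Y
      = ∑ x : (E → O) × (E → O), M.p x.1 * M.p x.2 * (X x.1 * Y x.2) := by
        simp only [Ex, Finset.sum_mul_sum, Fintype.sum_prod_type, mul_mul_mul_comm]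
    _ = ∑ x, M.p (swap x).1 * M.p (swap x).2 * (X (swap x).1 * Y (swap x).2) :=
        (Equiv.sum_comp swap_involutive.toPerm _).symm
    _ = ∑ x : (E → O) × (E → O), M.p x.1 * M.p x.2 * (X x.1 * Y x.1) := by
        simp only [hp_swap, hX_swap, hY_swap]
    _ = ∑ φ, M.p φ * (X φ * Y φ) := by
        simp only [Fintype.sum_prod_type, ← Finset.sum_mul, ← Finset.mul_sum, M.p_sum, mul_one]

theorem cEx_eq_Ex_of_dependsOn {X : (E → O) → ℝ} {A : (E → O) → Prop} (hX : DependsOn X s)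
    (hA : DependsOn A sᶜ) (hA₀ : Pr M A ≠ 0) : cEx M X A = Ex M X := by
  let indicator (φ : E → O) : ℝ := if A φ then 1 else 0
  have h_indicator : DependsOn indicator sᶜ := fun φ φ' h => by simp only [indicator, hA h]
  have hPr : Pr M A = Ex M indicator := by simp [Pr, Ex, indicator]
  have h_num : (∑ φ, if A φ then M.p φ * X φ else 0) = Ex M fun φ => X φ * indicator φ := by
    simp [Ex, indicator]
  rw [cEx, div_eq_iff hA₀, h_num, Ex_mul_of_dependsOn hX h_indicator, hPr]

theorem exists_of_Pr_pos {A : (E → O) → Prop} (h : 0 < Pr M A) : ∃ φ, A φ := by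
  by_contra! hA
  simp [Pr, hA] at h

theorem dependsOn_Fm (M : Problem E O) (ψ : Sub E O) (e : E) : DependsOn (Fm M ψ e) {e} :=
  fun φ φ' h => by simp only [Fm, h e rfl]

end Independence

section Subrealizations

/-- The domain of a subrealization: the set of items it assigns a state to. -/
def dom {E O : Type*} [Fintype E] (ψ : Sub E O) : Finset E := univ.filter fun e => ψ e ≠ none

theorem mem_dom {E O : Type*} [Fintype E] {ψ : Sub E O} {e : E} : e ∈ dom ψ ↔ ψ e ≠ none := by
  simp only [dom, Finset.mem_filter, Finset.mem_univ, true_and]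

theorem dom_updateSub {E O : Type*} [Fintype E] [DecidableEq E] (ψ : Sub E O) (e : E) (o : O) :
    dom (updateSub ψ e o) = insert e (dom ψ) := by
  ext i
  by_cases hi : i = e <;> simp [mem_dom, updateSub, hi]

namespace subext

variable {E O : Type*} {ψ ψ' ψ'' : Sub E O}

theorem refl (ψ : Sub E O) : subext ψ ψ := fun _ _ h => h

theorem trans (h : subext ψ ψ') (h' : subext ψ' ψ'') : subext ψ ψ'' :=
  fun e o he => h' e o (h e o he)

theorem dom_subset [Fintype E] (h : subext ψ ψ') : dom ψ ⊆ dom ψ' := fun e he => by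
  obtain ⟨o, ho⟩ := Option.ne_none_iff_exists'.mp (mem_dom.mp he)
  simp [mem_dom, h e o ho]

theorem updateSub_subext_toSub [DecidableEq E] {φ : E → O} (h : subext ψ (toSub φ)) (e : E) :
    subext (updateSub ψ e (φ e)) (toSub φ) := fun i o hi => by
  by_cases hie : i = e
  · simpa [updateSub, toSub, hie] using hi
  · exact h i o (by simpa [updateSub, hie] using hi)

theorem subext_updateSub [DecidableEq E] {φ : E → O} (h : subext ψ (toSub φ)) (e : E) :
    subext ψ (updateSub ψ e (φ e)) := fun i o hi => by
  by_cases hie : i = e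
  · simpa [updateSub, toSub, hie] using h i o hi
  · simpa [updateSub, hie] using hi

end subext

theorem dependsOn_subext_toSub {E O : Type*} [Fintype E] (ψ : Sub E O) :
    DependsOn (fun φ : E → O => subext ψ (toSub φ)) (dom ψ) := fun φ φ' h => by
  refine propext (forall₂_congr fun i o => imp_congr_right fun hi => ?_)
  simp only [toSub, h i (by simp [mem_dom, hi])]

end Subrealizations

section Execution

variable {M : Problem E O} {π σ : Sub E O → E} {φ φ' : E → O} {ψ : Sub E O} {e : E} {m n : ℕ}

theorem execAux_succ_of_lt (h : M.f (execAux M π φ n) < M.Q) :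
    execAux M π φ (n + 1) =
      updateSub (execAux M π φ n) (π (execAux M π φ n)) (φ (π (execAux M π φ n))) := if_pos h

theorem execAux_succ_of_not_lt (h : ¬M.f (execAux M π φ n) < M.Q) :
    execAux M π φ (n + 1) = execAux M π φ n := if_neg h

theorem execAux_subext_toSub (M : Problem E O) (π : Sub E O → E) (φ : E → O) (n : ℕ) :
    subext (execAux M π φ n) (toSub φ) := by
  induction n with
  | zero => exact fun i o h => nomatch h
  | succ n ih =>
    by_cases hf : M.f (execAux M π φ n) < M.Q
    · exact execAux_succ_of_lt hf ▸ ih.updateSub_subext_toSub _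
    · exact execAux_succ_of_not_lt hf ▸ ih

theorem execAux_subext_succ (M : Problem E O) (π : Sub E O → E) (φ : E → O) (n : ℕ) :
    subext (execAux M π φ n) (execAux M π φ (n + 1)) := by
  by_cases hf : M.f (execAux M π φ n) < M.Q
  · exact execAux_succ_of_lt hf ▸ (execAux_subext_toSub M π φ n).subext_updateSub _
  · exact execAux_succ_of_not_lt hf ▸ subext.refl _

theorem execAux_subext_of_le (M : Problem E O) (π : Sub E O → E) (φ : E → O) (h : m ≤ n) :
    subext (execAux M π φ m) (execAux M π φ n) := by
  induction h with
  | refl => exact subext.refl _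
  | step _ ih => exact ih.trans (execAux_subext_succ M π φ _)

theorem execAux_eq_of_subext_toSub (h : subext (execAux M π φ n) (toSub φ')) :
    execAux M π φ' n = execAux M π φ n := by
  induction n with
  | zero => rfl
  | succ n ih =>
    have ih := ih ((execAux_subext_succ M π φ n).trans h)
    by_cases hf : M.f (execAux M π φ n) < M.Q
    · have h_state : φ' (π (execAux M π φ n)) = φ (π (execAux M π φ n)) := by
        rw [execAux_succ_of_lt hf] at h
        exact Option.some.inj (h _ _ (if_pos rfl))
      rw [execAux_succ_of_lt hf, execAux_succ_of_lt (ih ▸ hf), ih, h_state]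
    · rw [execAux_succ_of_not_lt hf, execAux_succ_of_not_lt (ih ▸ hf), ih]

theorem notMem_dom_execAux_of_eqOn_compl (h : Set.EqOn φ φ' {e}ᶜ)
    (he : e ∉ dom (execAux M π φ n)) : e ∉ dom (execAux M π φ' n) := by
  have h_subext : subext (execAux M π φ n) (toSub φ') := by
    have h_dom : ∀ i ∈ (dom (execAux M π φ n) : Set E), φ i = φ' i := fun i hi =>
      h fun hie => he (hie ▸ hi)
    exact (dependsOn_subext_toSub _ h_dom).mp (execAux_subext_toSub M π φ n)
  rwa [execAux_eq_of_subext_toSub h_subext]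

theorem mem_Ssel : e ∈ Ssel M π φ ↔ e ∈ dom (cover M π φ) := by
  simp only [Ssel, mem_dom, Finset.mem_filter, Finset.mem_univ, true_and]

theorem dependsOn_mem_Ssel (M : Problem E O) (π : Sub E O → E) (e : E) :
    DependsOn (fun φ => e ∈ Ssel M π φ) {e}ᶜ := fun φ φ' h => by
  simp only [mem_Ssel, cover]
  exact propext (not_iff_not.mp ⟨notMem_dom_execAux_of_eqOn_compl h,
    notMem_dom_execAux_of_eqOn_compl (Set.EqOn.symm h)⟩)

theorem card_dom_execAux (hσ : IsPolicy M σ) (hf : M.f (execAux M σ φ n) < M.Q) :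
    #(dom (execAux M σ φ n)) = n := by
  induction n with
  | zero => simp [dom, execAux]
  | succ n ih =>
    have hf' : M.f (execAux M σ φ n) < M.Q :=
      (M.f_mono _ _ (execAux_subext_succ M σ φ n)).trans_lt hf
    have h_new : σ (execAux M σ φ n) ∉ dom (execAux M σ φ n) := by simp [mem_dom, hσ _ hf']
    rw [execAux_succ_of_lt hf', dom_updateSub, Finset.card_insert_of_notMem h_new, ih hf']

theorem execAux_ssubext_cover (hσ : IsPolicy M σ) (hf : M.f (execAux M σ φ n) < M.Q) :
    ssubext (execAux M σ φ n) (cover M σ φ) := by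
  have h_new : σ (execAux M σ φ n) ∉ dom (execAux M σ φ n) := by simp [mem_dom, hσ _ hf]
  have h_lt : n < Fintype.card E := by
    simpa only [card_dom_execAux hσ hf] using Finset.card_lt_univ_of_notMem h_new
  refine ⟨execAux_subext_of_le M σ φ h_lt.le, fun h_eq => h_new ?_⟩
  have h_succ : σ (execAux M σ φ n) ∈ dom (execAux M σ φ (n + 1)) := by
    rw [execAux_succ_of_lt hf, dom_updateSub]
    exact Finset.mem_insert_self _ _
  have h_cover : σ (execAux M σ φ n) ∈ dom (cover M σ φ) :=
    (execAux_subext_of_le M σ φ h_lt).dom_subset h_succ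
  rwa [← h_eq] at h_cover

theorem ssubext_cover_iff (hσ : IsPolicy M σ) (hf : M.f ψ < M.Q) (hψ : ∃ φ, visits M σ φ ψ) :
    ssubext ψ (cover M σ φ) ↔ subext ψ (toSub φ) := by
  refine ⟨fun h => h.1.trans (execAux_subext_toSub M σ φ _), fun h => ?_⟩
  obtain ⟨φ', n, rfl⟩ := hψ
  have h_eq : execAux M σ φ n = execAux M σ φ' n := execAux_eq_of_subext_toSub h
  exact h_eq ▸ execAux_ssubext_cover hσ (h_eq ▸ hf)

theorem dependsOn_ssubext_cover (hσ : IsPolicy M σ) (hψ : ψ ∈ Nnodes M σ) :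
    DependsOn (fun φ => ssubext ψ (cover M σ φ)) {σ ψ}ᶜ := by
  obtain ⟨-, hf, h_visits⟩ := Finset.mem_filter.mp hψ
  have h_new : (dom ψ : Set E) ⊆ {σ ψ}ᶜ := by simp [mem_dom, hσ ψ hf]
  simpa only [ssubext_cover_iff hσ hf (exists_of_Pr_pos h_visits)] using
    (dependsOn_subext_toSub ψ).mono h_new

end Execution

theorem conditional_marginal_eq_general (M : Problem E O) (σ : Sub E O → E) (hσ : IsPolicy M σ)
    (π : Sub E O → E) (e : E) (ψ : Sub E O) (hmem : ψ ∈ Nnodes M σ) (hsel : σ ψ = e)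
    (hpos : 0 < Pr M fun φ =>
      (e ∈ Ssel M σ φ ∧ e ∈ Ssel M π φ) ∧ ssubext ψ (cover M σ φ)) :
    cEx M (Fm M ψ e)
        (fun φ => (e ∈ Ssel M σ φ ∧ e ∈ Ssel M π φ) ∧ ssubext ψ (cover M σ φ))
      = Ex M (Fm M ψ e) := by
  subst hsel
  refine cEx_eq_Ex_of_dependsOn (dependsOn_Fm M ψ _) (fun φ φ' h => ?_) hpos.ne'
  have hσ_sel := dependsOn_mem_Ssel M σ _ h
  have hπ_sel := dependsOn_mem_Ssel M π _ h
  have h_visit := dependsOn_ssubext_cover hσ hmem h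
  exact congrArg₂ And (congrArg₂ And hσ_sel hπ_sel) h_visit

/-- For every item `e` and every node `ψ` of the greedy tree at which `σ`
selects `e`, the expected marginal utility of `e` conditioned on `e ∈ S(σ) ∩ S(π*)` and on
`σ` visiting `ψ` (i.e. `ψ ⊂ Ψ(σ)`) equals its unconditional expectation. -/
theorem conditional_marginal_eq
    (M : Problem E O) (α : ℝ) (hα : 1 ≤ α)
    (σ : Sub E O → E) (hσ : IsGreedy M α σ)
    (πs : Sub E O → E) (hπs : IsOptimal M πs)
    (e : E) (ψ : Sub E O) (hmem : ψ ∈ Nnodes M σ) (hsel : σ ψ = e)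
    (hpos : 0 < Pr M fun φ =>
      (e ∈ Ssel M σ φ ∧ e ∈ Ssel M πs φ) ∧ ssubext ψ (cover M σ φ)) :
    cEx M (Fm M ψ e)
        (fun φ => (e ∈ Ssel M σ φ ∧ e ∈ Ssel M πs φ) ∧ ssubext ψ (cover M σ φ))
      = Ex M (Fm M ψ e) :=
  conditional_marginal_eq_general M σ hσ.1 πs e ψ hmem hsel hpos

end
end SSC
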